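/- (Fundamental quadratic identity) Let Ω and Υ be types and let A : Ω → Fin 4 → Fin 4 → ℝ and B : Υ → Fin 4 → Fin 4 → ℝ satisfy A^{ω}_{ab} = −A^{ω}_{ba} and B^{υ}_{ab} = −B^{υ}_{ba} for all ω, υ and all indices. Define the trace-free auxiliary tensor Ĉ^{ω,υ}_{ab} = A^{ω}_{ac} B^{υ c}{}_{b} + (1/4)(A^{ω rs} B^{υ}_{rs}) η_{ab}. Then for all ω ∈ Ω, υ ∈ Υ and all indices a,b,c,d: (⋆A^{ω})_{ab} (⋆B^{υ})^{cd} + A^{ω cd} B^{υ}_{ab} = −(δ^{c}_{a} Ĉ^{ω,υ d}{}_{b} − δ^{d}_{a} Ĉ^{ω,υ c}{}_{b} − δ^{c}_{b} Ĉ^{ω,υ d}{}_{a} + δ^{d}_{b} Ĉ^{ω,υ c}{}_{a}), where ⋆F_{ab} = (1/2) ε_{ab}{}^{pq} F_{pq} denotes the Hodge dual of an antisymmetric rank-2 tensor. -/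

import Mathlib

noncomputable section

/-- The Minkowski metric `η = diag(+1,−1,−1,−1)` on `ℝ⁴`.  Its inverse has the
same components, so `mink` is also used to raise indices. -/
def mink : Fin 4 → Fin 4 → ℝ :=
  fun a b => if a = b then (if a = 0 then 1 else -1) else 0

/-- The totally antisymmetric Levi-Civita tensor with all indices down and
`ε₀₁₂₃ = +1`, via the Vandermonde-product formula. -/
def lev : Fin 4 → Fin 4 → Fin 4 → Fin 4 → ℝ :=
  fun a b c d =>
    (((b : ℕ) : ℝ) - ((a : ℕ) : ℝ)) * (((c : ℕ) : ℝ) - ((a : ℕ) : ℝ)) *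
    (((d : ℕ) : ℝ) - ((a : ℕ) : ℝ)) * (((c : ℕ) : ℝ) - ((b : ℕ) : ℝ)) *
    (((d : ℕ) : ℝ) - ((b : ℕ) : ℝ)) * (((d : ℕ) : ℝ) - ((c : ℕ) : ℝ)) / 12

/-- `ε_{ab}{}^{pq}`: the Levi-Civita tensor with its last two indices raised
by the Minkowski metric. -/
def levUp (a b p q : Fin 4) : ℝ := ∑ r, ∑ s, mink p r * mink q s * lev a b r s

/-- The Kronecker delta on `Fin 4`. -/
def kd (a b : Fin 4) : ℝ := if a = b then 1 else 0

/-- Hodge dual `⋆F_{ab} = (1/2) ε_{ab}{}^{pq} F_{pq}` of a rank-2 tensor. -/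
def hodge2 (F : Fin 4 → Fin 4 → ℝ) (a b : Fin 4) : ℝ :=
  (1/2) * ∑ p, ∑ q, levUp a b p q * F p q

/-- Rank-2 tensor with both indices raised by the Minkowski metric. -/
def up2 (F : Fin 4 → Fin 4 → ℝ) (a b : Fin 4) : ℝ :=
  ∑ p, ∑ q, mink a p * mink b q * F p q

/-- The trace-free auxiliary tensor
`Ĉ^{ω,υ}_{ab} = A^{ω}_{ac} B^{υ c}{}_{b} + (1/4)(A^{ω rs} B^{υ}_{rs}) η_{ab}`. -/
def Chat {Ω Υ : Type*} (A : Ω → Fin 4 → Fin 4 → ℝ) (B : Υ → Fin 4 → Fin 4 → ℝ)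
    (ω : Ω) (υ : Υ) (a b : Fin 4) : ℝ :=
  (∑ c, ∑ p, A ω a c * mink c p * B υ p b) +
    (1/4) * (∑ r, ∑ s, up2 (A ω) r s * B υ r s) * mink a b

theorem sum_mink_mul (f : Fin 4 → ℝ) (a : Fin 4) :
    ∑ p, mink a p * f p = mink a a * f a :=
  Finset.sum_eq_single a (fun b _ hb => by simp [mink, hb.symm]) (by simp)

theorem up2_eq (F : Fin 4 → Fin 4 → ℝ) (a b : Fin 4) :
    up2 F a b = mink a a * mink b b * F a b := by
  simp only [up2, mul_assoc, ← Finset.mul_sum, sum_mink_mul]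

theorem levUp_eq (a b p q : Fin 4) :
    levUp a b p q = mink p p * mink q q * lev a b p q :=
  up2_eq (lev a b) p q

/-- The antisymmetric tensor with components `F₀₁, F₀₂, F₀₃, F₁₂, F₁₃, F₂₃`. -/
def antisymmTensor (x y z u v w : ℝ) : Fin 4 → Fin 4 → ℝ :=
  ![![0, x, y, z], ![-x, 0, u, v], ![-y, -u, 0, w], ![-z, -v, -w, 0]]

theorem eq_antisymmTensor {F : Fin 4 → Fin 4 → ℝ} (hF : ∀ a b, F a b = -F b a) :
    F = antisymmTensor (F 0 1) (F 0 2) (F 0 3) (F 1 2) (F 1 3) (F 2 3) := by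
  funext a b
  have diag (a) : F a a = 0 := by linarith [hF a a]
  fin_cases a <;> fin_cases b <;> first | exact diag _ | exact hF _ _ | rfl

theorem hodge2_antisymmTensor (x y z u v w : ℝ) :
    hodge2 (antisymmTensor x y z u v w) = antisymmTensor w (-v) u (-z) y (-x) := by
  funext a b
  fin_cases a <;> fin_cases b <;>
    simp [hodge2, levUp_eq, mink, lev, antisymmTensor, Fin.sum_univ_four] <;> ring

theorem sum_up2_antisymmTensor_mul (x y z u v w x₂ y₂ z₂ u₂ v₂ w₂ : ℝ) :
    ∑ r, ∑ s, up2 (antisymmTensor x y z u v w) r s * antisymmTensor x₂ y₂ z₂ u₂ v₂ w₂ r s =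
      2 * (u * u₂ + v * v₂ + w * w₂ - x * x₂ - y * y₂ - z * z₂) := by
  simp [up2_eq, mink, antisymmTensor, Fin.sum_univ_four]
  ring

theorem antisymmTensor_swap (x y z u v w : ℝ) (a b : Fin 4) :
    antisymmTensor x y z u v w a b = -antisymmTensor x y z u v w b a := by
  fin_cases a <;> fin_cases b <;> simp [antisymmTensor]

/-- Two antisymmetric tensors are equal once they agree on increasing pairs of indices. -/
theorem eq_of_eq_on_lt {F G : Fin 4 → Fin 4 → ℝ} (hF : ∀ a b, F a b = -F b a)
    (hG : ∀ a b, G a b = -G b a) (h : ∀ a b, a < b → F a b = G a b) (a b : Fin 4) :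
    F a b = G a b := by
  rcases lt_trichotomy a b with hab | rfl | hab
  · exact h a b hab
  · linarith [hF a a, hG a a]
  · rw [hF, hG, h b a hab]

set_option maxHeartbeats 1000000 in
/-- Fundamental quadratic identity for pairs of tensors antisymmetric in a
pair of indices. -/
theorem fundamental_quadratic_identity {Ω Υ : Type*}
    (A : Ω → Fin 4 → Fin 4 → ℝ) (B : Υ → Fin 4 → Fin 4 → ℝ)
    (hA : ∀ ω a b, A ω a b = -A ω b a)
    (hB : ∀ υ a b, B υ a b = -B υ b a) :
    ∀ (ω : Ω) (υ : Υ) (a b c d : Fin 4),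
      hodge2 (A ω) a b * up2 (hodge2 (B υ)) c d + up2 (A ω) c d * B υ a b =
        -(kd c a * (∑ p, mink d p * Chat A B ω υ p b) -
          kd d a * (∑ p, mink c p * Chat A B ω υ p b) -
          kd c b * (∑ p, mink d p * Chat A B ω υ p a) +
          kd d b * (∑ p, mink c p * Chat A B ω υ p a)) := by
  intro ω υ a b c d
  simp only [sum_mink_mul, Chat, mul_assoc, ← Finset.mul_sum]
  rw [eq_antisymmTensor (hA ω), eq_antisymmTensor (hB υ)]
  generalize A ω 0 1 = x, A ω 0 2 = y, A ω 0 3 = z, A ω 1 2 = u, A ω 1 3 = v, A ω 2 3 = w,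
    B υ 0 1 = x₂, B υ 0 2 = y₂, B υ 0 3 = z₂, B υ 1 2 = u₂, B υ 1 3 = v₂, B υ 2 3 = w₂
  rw [sum_up2_antisymmTensor_mul, hodge2_antisymmTensor, hodge2_antisymmTensor]
  simp only [up2_eq]
  revert a b
  refine eq_of_eq_on_lt (fun a b => ?_) (fun a b => by ring) fun a b hab => ?_
  · rw [antisymmTensor_swap _ _ _ _ _ _ a b, antisymmTensor_swap _ _ _ _ _ _ a b]
    ring
  revert c d
  refine eq_of_eq_on_lt (fun c d => ?_) (fun c d => by ring) fun c d hcd => ?_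
  · rw [antisymmTensor_swap _ _ _ _ _ _ c d, antisymmTensor_swap _ _ _ _ _ _ c d]
    ring
  simp only [Fin.sum_univ_four]
  fin_cases a <;> fin_cases b <;> first | exact absurd hab (by decide) | skip
  all_goals
    fin_cases c <;> fin_cases d <;> first
      | exact absurd hcd (by decide)
      | (simp [mink, kd, antisymmTensor] <;> ring)
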